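/- arXiv:1605.06660 — 3 statements merged into one kernel-verified Lean document; each statement's English description precedes it below -/
import Mathlib

section
/- For every integer n ≥ 1, every nonnegative integer p, every real α ≥ 0 and every real x ≥ 0, the series Σ_{k=0}^{∞} w_{n,k}^{(α)}(x) of the nonnegative weights w_{n,k}^{(α)}(x) = C(n+p+k-1, k) · (∏_{i=0}^{k-1}(x+iα)) · (∏_{i=0}^{n+p-1}(1+iα)) / (∏_{i=0}^{n+p+k-1}(1+x+iα)) converges and its sum equals 1. -/
/-!
The weights are the law of an inverse Pólya–Eggenberger urn: with initial masses `1` (white) and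
`x` (black) and reinforcement `α`, the number `w0 N 0 α x k` is the probability that exactly `k`
black draws precede the `N`-th white draw. Summing to one means that the `N`-th white draw almost
surely occurs, which is proved by induction on `N`.

Let `blackFlux N α x k` be the probability that the urn passes through the state
"`N` white, `k` black" and then draws black. Conservation of probability at each state gives
`w (N+1) (k+1) + flux N (k+1) = w N (k+1) + flux N k`, and this telescopes to
`∑_{k ≤ K} w (N+1) k + flux N K = ∑_{k ≤ K} w N k` (`sum_w0_succ_add_flux`). Hence the weights of
level `N+1` are summable as soon as those of level `N` are, and the flux converges to some `L ≥ 0`.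
Since `(1 + N α) * flux N k = (x + k α) * w (N+1) k`, a limit `L > 0` would bound `w (N+1) k` below
by a multiple of `1 / (k+1)`, contradicting summability. So `L = 0` and both levels have the
same sum; level `0` is concentrated at `k = 0`.
-/

/-- The weights of the generalized positive linear operator with λ = 0 (IPED case). -/
noncomputable def w0 (n p : ℕ) (α x : ℝ) (k : ℕ) : ℝ :=
  (Nat.choose (n + p + k - 1) k : ℝ) * (∏ i ∈ Finset.range k, (x + (i : ℝ) * α)) *
    (∏ i ∈ Finset.range (n + p), (1 + (i : ℝ) * α)) /
    (∏ i ∈ Finset.range (n + p + k), (1 + x + (i : ℝ) * α))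

/-- The probability that the urn reaches `N` white and `k` black draws and that the next draw is
black. -/
noncomputable def blackFlux (N : ℕ) (α x : ℝ) (k : ℕ) : ℝ :=
  (Nat.choose (N + k) k : ℝ) * (∏ i ∈ Finset.range (k + 1), (x + (i : ℝ) * α)) *
    (∏ i ∈ Finset.range N, (1 + (i : ℝ) * α)) /
    (∏ i ∈ Finset.range (N + k + 1), (1 + x + (i : ℝ) * α))

lemma w0_eq_add (n p : ℕ) (α x : ℝ) (k : ℕ) : w0 n p α x k = w0 (n + p) 0 α x k := rfl

lemma w0_nonneg (N : ℕ) {α x : ℝ} (hα : 0 ≤ α) (hx : 0 ≤ x) (k : ℕ) : 0 ≤ w0 N 0 α x k := by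
  unfold w0; positivity

lemma blackFlux_nonneg (N : ℕ) {α x : ℝ} (hα : 0 ≤ α) (hx : 0 ≤ x) (k : ℕ) :
    0 ≤ blackFlux N α x k := by
  unfold blackFlux; positivity

lemma w0_succ (N : ℕ) (α x : ℝ) (k : ℕ) : w0 (N + 1) 0 α x k =
    (Nat.choose (N + k) k : ℝ) * (∏ i ∈ Finset.range k, (x + (i : ℝ) * α)) *
    (∏ i ∈ Finset.range (N + 1), (1 + (i : ℝ) * α)) /
    (∏ i ∈ Finset.range (N + k + 1), (1 + x + (i : ℝ) * α)) := by
  unfold w0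
  rw [show N + 1 + 0 + k - 1 = N + k by omega, show N + 1 + 0 + k = N + k + 1 by omega, add_zero]

/-- From a given state, the white and black transition probabilities are in the ratio of the
current masses `1 + N α` and `x + k α`. -/
lemma blackFlux_mul (N : ℕ) (α x : ℝ) (k : ℕ) :
    blackFlux N α x k * (1 + N * α) = w0 (N + 1) 0 α x k * (x + k * α) := by
  rw [w0_succ, blackFlux, Finset.prod_range_succ _ k, Finset.prod_range_succ _ N]
  ring

/-- Conservation of probability at the state with `N` white and no black draws. -/
lemma conservation_zero (N : ℕ) {α x : ℝ} (hα : 0 ≤ α) (hx : 0 ≤ x) :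
    w0 (N + 1) 0 α x 0 + blackFlux N α x 0 = w0 N 0 α x 0 := by
  have hD : (∏ i ∈ Finset.range N, (1 + x + (i : ℝ) * α)) ≠ 0 := by positivity
  have hd : 1 + x + (N : ℝ) * α ≠ 0 := by positivity
  rw [w0_succ, blackFlux, w0]
  simp only [Finset.prod_range_succ, add_zero, Nat.choose_zero_right, Finset.prod_range_zero,
    Nat.cast_one, Nat.cast_zero]
  generalize (∏ i ∈ Finset.range N, (1 + (i : ℝ) * α)) = A
  field_simp
  ring

/-- Conservation of probability at the state with `N` white and `k + 1` black draws: the inflow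
from the left and from below is recombined by Pascal's rule. -/
lemma conservation_succ (N : ℕ) {α x : ℝ} (hα : 0 ≤ α) (hx : 0 ≤ x) (k : ℕ) :
    w0 (N + 1) 0 α x (k + 1) + blackFlux N α x (k + 1) =
      w0 N 0 α x (k + 1) + blackFlux N α x k := by
  have hD : (∏ i ∈ Finset.range (N + k + 1), (1 + x + (i : ℝ) * α)) ≠ 0 := by positivity
  have hd : 1 + x + ((N : ℝ) + k + 1) * α ≠ 0 := by positivity
  rw [w0_succ, blackFlux, blackFlux, w0, show N + 0 + (k + 1) - 1 = N + k by omega,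
    show N + 0 + (k + 1) = N + k + 1 by omega, show N + (k + 1) = N + k + 1 by omega,
    Nat.choose_succ_succ, Finset.prod_range_succ _ (N + k + 1), Finset.prod_range_succ _ (k + 1),
    Finset.prod_range_succ _ N, add_zero]
  generalize (∏ i ∈ Finset.range (N + k + 1), (1 + x + (i : ℝ) * α)) = D at *
  generalize (∏ i ∈ Finset.range (k + 1), (x + (i : ℝ) * α)) = B
  generalize (∏ i ∈ Finset.range N, (1 + (i : ℝ) * α)) = A
  push_cast
  field_simp
  ring

lemma sum_w0_succ_add_flux (N : ℕ) {α x : ℝ} (hα : 0 ≤ α) (hx : 0 ≤ x) (K : ℕ) :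
    ∑ k ∈ Finset.range (K + 1), w0 (N + 1) 0 α x k + blackFlux N α x K =
      ∑ k ∈ Finset.range (K + 1), w0 N 0 α x k := by
  induction K with
  | zero => simpa using conservation_zero N hα hx
  | succ K ih =>
    rw [Finset.sum_range_succ _ (K + 1), Finset.sum_range_succ _ (K + 1)]
    linarith [conservation_succ N hα hx K]

lemma hasSum_w0 (N : ℕ) {α x : ℝ} (hα : 0 ≤ α) (hx : 0 ≤ x) :
    HasSum (fun k : ℕ => w0 N 0 α x k) 1 := by
  induction N with
  | zero =>
    have h0 : w0 0 0 α x 0 = 1 := by simp [w0]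
    rw [← h0]
    refine hasSum_single 0 fun k hk => ?_
    have : Nat.choose (0 + 0 + k - 1) k = 0 := Nat.choose_eq_zero_of_lt (by omega)
    rw [w0, this]
    simp
  | succ N ih =>
    have hsum : Summable (fun k : ℕ => w0 (N + 1) 0 α x k) := by
      refine summable_of_sum_range_le (c := 1) (w0_nonneg _ hα hx) fun K => ?_
      have h1 := sum_w0_succ_add_flux N hα hx K
      have h2 := sum_le_hasSum (Finset.range (K + 1)) (fun k _ => w0_nonneg N hα hx k) ih
      rw [Finset.sum_range_succ] at h1
      linarith [blackFlux_nonneg N hα hx K, w0_nonneg (N + 1) hα hx K]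
    obtain ⟨s, hs⟩ := hsum
    have hlim : Filter.Tendsto (blackFlux N α x) Filter.atTop (nhds (1 - s)) := by
      have h1 := (Filter.tendsto_add_atTop_iff_nat 1).2 ih.tendsto_sum_nat
      have h2 := (Filter.tendsto_add_atTop_iff_nat 1).2 hs.tendsto_sum_nat
      refine (h1.sub h2).congr fun K => ?_
      linarith [sum_w0_succ_add_flux N hα hx K]
    have hL : 0 ≤ 1 - s := ge_of_tendsto' hlim (blackFlux_nonneg N hα hx)
    suffices h : ¬ 0 < 1 - s by
      have : s = 1 := by linarith
      rwa [this] at hs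
    intro hpos
    have hev := hlim.eventually (lt_mem_nhds (half_lt_self hpos))
    obtain ⟨K, hK⟩ := Filter.eventually_atTop.1 hev
    -- Past `K` the flux exceeds half its limit, so the weights dominate a harmonic series.
    have hharm : Summable (fun k : ℕ => 1 / ((k + (K + 1) : ℕ) : ℝ)) := by
      have hs' := ((summable_nat_add_iff K).2 hs.summable).mul_left
        ((x + α + 1) / ((1 - s) / 2))
      refine hs'.of_nonneg_of_le (fun k => by positivity) fun k => ?_
      have h1 := hK (k + K) (by omega)
      have h2 := blackFlux_mul N α x (k + K)
      have h3 := w0_nonneg (N + 1) hα hx (k + K)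
      have h4 : (x + ((k + K : ℕ) : ℝ) * α) ≤ (x + α + 1) * ((k + (K + 1) : ℕ) : ℝ) := by
        have : (0 : ℝ) ≤ ((k + K : ℕ) : ℝ) := by positivity
        rw [← add_assoc]
        push_cast at this ⊢
        nlinarith [mul_nonneg hx this]
      have h5 := mul_le_mul_of_nonneg_left h4 h3
      have h6 : 0 ≤ blackFlux N α x (k + K) * (N * α) :=
        mul_nonneg (blackFlux_nonneg N hα hx _) (by positivity)
      rw [div_mul_eq_mul_div, div_le_div_iff₀ (by positivity) (by linarith)]
      linarith
    exact Real.not_summable_one_div_natCast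
      ((summable_nat_add_iff (f := fun k : ℕ => 1 / (k : ℝ)) (K + 1)).1 hharm)

/-- For every integer n ≥ 1, nonnegative integer p, real α ≥ 0 and
real x ≥ 0, the series Σ_{k=0}^{∞} w_{n,k}^{(α)}(x) converges with sum 1. -/
theorem baskakov_ped_weights_sum_to_one (n p : ℕ) (hn : 1 ≤ n) (α x : ℝ)
    (hα : 0 ≤ α) (hx : 0 ≤ x) :
    HasSum (fun k : ℕ => w0 n p α x k) 1 := by
  simp only [w0_eq_add n p]
  exact hasSum_w0 (n + p) hα hx
end

section
/- For every integer n ≥ 1, every nonnegative integer p, every λ ∈ {-1, 0}, every real α with 0 ≤ α < 1 when λ = 0 (and α ≥ 0 when λ = -1), and every x ∈ I, the first moment of the generalized operator satisfies L_n^{(α)}(t; x) := Σ_k w_{n,k}^{(α)}(x)·(k/n) = ((n+p)/n) · x/(1-(λ+1)α), the sum/series being convergent. -/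
/-!
Write `P_k(a) = ∏_{i<k} (a + iα)` for the rising factorial with step `α`, and `N = n + p`.
Multiplying the weights by `k` and using `P_{j+1}(x) = x P_j(x + α)` turns the first moment into
`N x / (1 - (λ+1)α)` times a total mass of weights of the same kind with shifted parameters, so
that only two normalisation identities are needed.

For `λ = -1` (the Pólya urn) it is the Vandermonde identity
`∑_{i+j=N} C(N,i) P_i(a) P_j(b) = P_N(a+b)`, `stepFactorial_vandermonde`, proved by induction
from Pascal's rule.

For `λ = 0` (the inverse Pólya urn) it is
`∑_j C(M+j-1,j) P_j(x) P_M(a) / P_{M+j}(a+x) = 1` for `a > 0`, `hasSum_invPolya`, used with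
`M = N + 1`, `a = 1 - α`; this is where `α < 1` enters. It is proved by induction on `M`, starting
from `M = 0`, where the mass sits at `j = 0`. In urn terms the `j`-th term is the probability that
exactly `j` failures precede the `M`-th success. The partial sums for `M` and `M + 1` differ by
the probability `G_M(J)` that `J + 1` failures occur before the `(M+1)`-st success, with the last
of them on trial `M + J + 1` (`sum_invPolya_succ`). Hence `G_M(J)` converges. Since the `J`-th term
for `M + 1` is at least a constant multiple of `G_M(J) / (J + 1)` and these terms are summable, the
limit is zero by divergence of the harmonic series.
-/

/-- The weights `w_{n,k}^{(α)}(x)` of the generalized positive linear operator,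
for the parameter `lam`(= λ) which is `-1` or `0`.  Empty products equal `1`;
for `lam = -1` and `k > n + p` the binomial coefficient vanishes, so these
weights vanish and summing over all `k : ℕ` is the same as summing over
`0 ≤ k ≤ n + p`. -/
noncomputable def w (n p : ℕ) (lam : ℤ) (α x : ℝ) (k : ℕ) : ℝ :=
  (((n : ℝ) + p) / ((n : ℝ) + p + ((lam : ℝ) + 1) * k)) *
    (Nat.choose ((n : ℤ) + p + (lam + 1) * k).toNat k : ℝ) *
    (∏ i ∈ Finset.range k, (x + (i : ℝ) * α)) *
    (∏ i ∈ Finset.range ((n : ℤ) + p + lam * k).toNat,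
        (1 + (lam : ℝ) * x + (i : ℝ) * α)) /
    (∏ i ∈ Finset.range ((n : ℤ) + p + (lam + 1) * k).toNat,
        (1 + ((lam : ℝ) + 1) * x + (i : ℝ) * α))

/-- The interval `I`: `[0,1]` when `λ = -1` and `[0,∞)` when `λ = 0`. -/
noncomputable def Iset (lam : ℤ) : Set ℝ :=
  if lam = -1 then Set.Icc (0 : ℝ) 1 else Set.Ici (0 : ℝ)

open Filter Topology

/-- The rising factorial with step `α`: `a (a + α) ⋯ (a + (k-1)α)`. -/
noncomputable def stepFactorial (α a : ℝ) (k : ℕ) : ℝ :=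
  ∏ i ∈ Finset.range k, (a + (i : ℝ) * α)

lemma stepFactorial_zero (α a : ℝ) : stepFactorial α a 0 = 1 := by
  simp [stepFactorial]

lemma stepFactorial_succ (α a : ℝ) (k : ℕ) :
    stepFactorial α a (k + 1) = stepFactorial α a k * (a + (k : ℝ) * α) := by
  simp [stepFactorial, Finset.prod_range_succ]

/-- Splitting off the first factor instead of the last one. -/
lemma stepFactorial_succ' (α a : ℝ) (k : ℕ) :
    stepFactorial α a (k + 1) = a * stepFactorial α (a + α) k := by
  rw [stepFactorial, Finset.prod_range_succ', stepFactorial, mul_comm]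
  congr 1
  · simp
  · refine Finset.prod_congr rfl fun i _ => ?_
    push_cast
    ring

lemma stepFactorial_pos {α a : ℝ} (hα : 0 ≤ α) (ha : 0 < a) (k : ℕ) :
    0 < stepFactorial α a k :=
  Finset.prod_pos fun i _ => by positivity

lemma stepFactorial_nonneg {α a : ℝ} (hα : 0 ≤ α) (ha : 0 ≤ a) (k : ℕ) :
    0 ≤ stepFactorial α a k :=
  Finset.prod_nonneg fun i _ => by positivity

lemma stepFactorial_vandermonde (α a b : ℝ) (N : ℕ) :
    ∑ ij ∈ Finset.HasAntidiagonal.antidiagonal N,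
      (N.choose ij.1 : ℝ) * (stepFactorial α a ij.1 * stepFactorial α b ij.2) =
      stepFactorial α (a + b) N := by
  induction N with
  | zero => simp [stepFactorial_zero]
  | succ N ih =>
    rw [Finset.sum_antidiagonal_choose_succ_mul
      (fun i j => stepFactorial α a i * stepFactorial α b j), stepFactorial_succ, ← ih,
      Finset.sum_mul, ← Finset.sum_add_distrib]
    refine Finset.sum_congr rfl fun ij hij => ?_
    have h := Finset.HasAntidiagonal.mem_antidiagonal.mp hij
    have hc : N.choose ij.2 = N.choose ij.1 := by
      rw [← h, Nat.choose_symm_add]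
    rw [hc, stepFactorial_succ, stepFactorial_succ, ← h]
    push_cast
    ring

/-- The inverse Pólya weights: the probability that exactly `j` failures precede the `M`-th success
in an urn with initial success and failure masses `a`, `x` and reinforcement `α`. For `M = 0` the
truncated subtraction gives the intended point mass at `j = 0`. -/
noncomputable def invPolya (α a x : ℝ) (M j : ℕ) : ℝ :=
  ((M + j - 1).choose j : ℝ) * stepFactorial α x j * stepFactorial α a M /
    stepFactorial α (a + x) (M + j)

/-- The probability that `M` successes occur in the first `M + J` trials and the next trial is a
failure. -/
noncomputable def invPolyaGap (α a x : ℝ) (M J : ℕ) : ℝ :=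
  ((M + J).choose J : ℝ) * stepFactorial α x (J + 1) * stepFactorial α a M /
    stepFactorial α (a + x) (M + J + 1)

lemma sum_invPolya_succ {α a x : ℝ} (hα : 0 ≤ α) (ha : 0 < a) (hx : 0 ≤ x) (M J : ℕ) :
    ∑ j ∈ Finset.range (J + 1), invPolya α a x M j =
      ∑ j ∈ Finset.range (J + 1), invPolya α a x (M + 1) j + invPolyaGap α a x M J := by
  have hax : 0 < a + x := by positivity
  induction J with
  | zero =>
    have h1 := (stepFactorial_pos hα hax M).ne'
    have h2 : a + x + (M : ℝ) * α ≠ 0 := by positivity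
    simp only [invPolya, invPolyaGap, zero_add, Finset.sum_range_one, Nat.choose_zero_right,
      stepFactorial_zero, stepFactorial_succ, add_zero, Nat.cast_zero, Nat.cast_one]
    field_simp
    ring
  | succ J ih =>
    rw [Finset.sum_range_succ, ih, Finset.sum_range_succ _ (J + 1)]
    have h1 := (stepFactorial_pos hα hax (M + J + 1)).ne'
    have h2 : a + x + ((M + J + 1 : ℕ) : ℝ) * α ≠ 0 := by positivity
    have hstep : invPolya α a x M (J + 1) + invPolyaGap α a x M J =
        invPolya α a x (M + 1) (J + 1) + invPolyaGap α a x M (J + 1) := by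
      have e1 : M + (J + 1) - 1 = M + J := by omega
      have e2 : M + 1 + (J + 1) - 1 = M + J + 1 := by omega
      have e3 : M + 1 + (J + 1) = M + J + 1 + 1 := by omega
      have e4 : M + (J + 1) = M + J + 1 := by omega
      simp only [invPolya, invPolyaGap]
      rw [e1, e2, e3, e4, Nat.choose_succ_succ, stepFactorial_succ α (a + x) (M + J + 1),
        stepFactorial_succ α x (J + 1), stepFactorial_succ α a M]
      field_simp
      push_cast
      ring
    linarith

lemma invPolya_nonneg {α a x : ℝ} (hα : 0 ≤ α) (ha : 0 < a) (hx : 0 ≤ x) (M j : ℕ) :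
    0 ≤ invPolya α a x M j := by
  have h1 := stepFactorial_nonneg hα hx j
  have h2 := stepFactorial_nonneg hα ha.le M
  have h3 := stepFactorial_nonneg hα (add_nonneg ha.le hx) (M + j)
  unfold invPolya
  positivity

lemma invPolyaGap_nonneg {α a x : ℝ} (hα : 0 ≤ α) (ha : 0 < a) (hx : 0 ≤ x) (M J : ℕ) :
    0 ≤ invPolyaGap α a x M J := by
  have h1 := stepFactorial_nonneg hα hx (J + 1)
  have h2 := stepFactorial_nonneg hα ha.le M
  have h3 := stepFactorial_nonneg hα (add_nonneg ha.le hx) (M + J + 1)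
  unfold invPolyaGap
  positivity

/-- On trial `M + J + 1`, after `M` successes and `J` failures, success and failure have odds
`a + Mα : x + Jα`. -/
lemma invPolya_mul_eq_gap_mul (α a x : ℝ) (M J : ℕ) :
    invPolya α a x (M + 1) J * (x + (J : ℝ) * α) =
      invPolyaGap α a x M J * (a + (M : ℝ) * α) := by
  have e1 : M + 1 + J - 1 = M + J := by omega
  have e2 : M + 1 + J = M + J + 1 := by omega
  simp only [invPolya, invPolyaGap]
  rw [e1, e2, stepFactorial_succ α x, stepFactorial_succ α a]
  ring

lemma hasSum_invPolya {α a x : ℝ} (hα : 0 ≤ α) (ha : 0 < a) (hx : 0 ≤ x) (M : ℕ) :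
    HasSum (invPolya α a x M) 1 := by
  induction M with
  | zero =>
    convert hasSum_single (f := invPolya α a x 0) 0 ?_ using 1
    · simp [invPolya, stepFactorial_zero]
    · intro j hj
      have : (0 + j - 1).choose j = 0 := Nat.choose_eq_zero_of_lt (by omega)
      rw [invPolya, this]
      simp
  | succ M ih =>
    have hnn := invPolya_nonneg hα ha hx (M + 1)
    have hG := invPolyaGap_nonneg hα ha hx M
    have hsummable : Summable (invPolya α a x (M + 1)) := by
      refine summable_of_sum_range_le (c := 1) hnn fun J => ?_
      have h1 := sum_invPolya_succ hα ha hx M J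
      have h2 := sum_le_hasSum (Finset.range (J + 1))
        (fun j _ => invPolya_nonneg hα ha hx M j) ih
      have h3 := hG J
      have h4 := hnn J
      rw [Finset.sum_range_succ (invPolya α a x (M + 1))] at h1
      linarith
    obtain ⟨S, hS⟩ := hsummable
    have hlim : Tendsto (invPolyaGap α a x M) atTop (𝓝 (1 - S)) := by
      have h1 := ih.tendsto_sum_nat.comp (tendsto_add_atTop_nat 1)
      have h2 := hS.tendsto_sum_nat.comp (tendsto_add_atTop_nat 1)
      refine (h1.sub h2).congr fun J => ?_
      have h3 := sum_invPolya_succ hα ha hx M J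
      simp only [Function.comp_apply]
      linarith
    have hL : 0 ≤ 1 - S := ge_of_tendsto' hlim hG
    rcases hL.eq_or_lt with h0 | hpos
    · have : S = 1 := by linarith
      rwa [this] at hS
    · exfalso
      have hK : 0 < x + α + 1 := by positivity
      have hc : 0 < (1 - S) / 2 * a / (x + α + 1) := by positivity
      have hev : ∀ᶠ J in atTop, (1 - S) / 2 < invPolyaGap α a x M J :=
        hlim.eventually_const_lt (by linarith)
      have hharm : Summable fun J : ℕ => ((1 - S) / 2 * a / (x + α + 1)) * (1 / ((J : ℝ) + 1)) := by
        refine Summable.of_norm_bounded_eventually_nat hS.summable ?_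
        filter_upwards [hev] with J hJ
        rw [Real.norm_of_nonneg (by positivity), div_mul_div_comm, mul_one,
          div_le_iff₀ (by positivity)]
        have hJ0 : (0 : ℝ) ≤ J := Nat.cast_nonneg J
        have hM0 : 0 ≤ (M : ℝ) * α := by positivity
        calc (1 - S) / 2 * a ≤ invPolyaGap α a x M J * (a + (M : ℝ) * α) := by
              exact mul_le_mul hJ.le (by linarith) ha.le (hG J)
          _ = invPolya α a x (M + 1) J * (x + (J : ℝ) * α) :=
              (invPolya_mul_eq_gap_mul α a x M J).symm
          _ ≤ invPolya α a x (M + 1) J * ((x + α + 1) * ((J : ℝ) + 1)) := by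
              refine mul_le_mul_of_nonneg_left ?_ (hnn J)
              nlinarith [mul_nonneg hx hJ0]
      have h := (summable_mul_left_iff hc.ne').mp hharm
      exact Real.not_summable_one_div_natCast
        ((summable_nat_add_iff 1).mp (by simpa using h))

/-- For `λ = 0` the `(k+1)`-st summand of the first moment is a constant multiple of the inverse
Pólya weight with `M = n + p + 1` and initial masses `1 - α`, `x + α`. -/
lemma w_zero_succ (n p : ℕ) (hn : 1 ≤ n) {α x : ℝ} (hα1 : α < 1) (j : ℕ) :
    w n p 0 α x (j + 1) * (((j + 1 : ℕ) : ℝ) / n) =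
      ((n : ℝ) + p) / n * (x / (1 - α)) * invPolya α (1 - α) (x + α) (n + p + 1) j := by
  have hn0 : (n : ℝ) ≠ 0 := by positivity
  have hNk : (n : ℝ) + p + ((j : ℝ) + 1) ≠ 0 := by positivity
  have hα' : 1 - α ≠ 0 := by linarith
  have e1 : ((n : ℤ) + p + (0 + 1) * ((j + 1 : ℕ) : ℤ)).toNat = n + p + j + 1 := by omega
  have e2 : ((n : ℤ) + p + 0 * ((j + 1 : ℕ) : ℤ)).toNat = n + p := by omega
  have e3 : n + p + 1 + j - 1 = n + p + j := by omega
  have e4 : n + p + 1 + j = n + p + j + 1 := by omega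
  have e5 : 1 - α + (x + α) = 1 + x := by ring
  have hch : ((n + p + j + 1 : ℕ) : ℝ) * ((n + p + j).choose j : ℝ) =
      ((n + p + j + 1).choose (j + 1) : ℝ) * ((j : ℝ) + 1) := by
    exact_mod_cast Nat.add_one_mul_choose_eq (n + p + j) j
  push_cast at hch
  have hP : stepFactorial α (1 - α) (n + p + 1) = (1 - α) * stepFactorial α 1 (n + p) := by
    rw [stepFactorial_succ']
    congr 2
    ring
  unfold invPolya
  rw [e3, e4, e5, hP]
  unfold w
  rw [e1, e2]
  simp only [Int.cast_zero, zero_mul, add_zero, zero_add, one_mul]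
  change _ * _ * stepFactorial α x (j + 1) * stepFactorial α 1 (n + p) /
    stepFactorial α (1 + x) (n + p + j + 1) * _ = _
  rw [stepFactorial_succ']
  push_cast
  have hcc : ((n + p + j + 1).choose (j + 1) : ℝ) * ((j : ℝ) + 1) / ((n : ℝ) + p + ((j : ℝ) + 1)) =
      ((n + p + j).choose j : ℝ) := by
    rw [← hch, div_eq_iff hNk]
    ring
  rw [← hcc]
  field_simp

/-- For `λ = -1` the summand of index `i + 1`, where `i + j + 1 = n + p`, is a constant multiple of
a Vandermonde term. -/
lemma w_neg_one_succ (n p : ℕ) {α x : ℝ} {N i j : ℕ} (hN : n + p = N + 1) (hij : i + j = N) :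
    w n p (-1) α x (i + 1) * (((i + 1 : ℕ) : ℝ) / n) =
      ((n : ℝ) + p) / n * x / stepFactorial α (1 + α) N *
        ((N.choose i : ℝ) * (stepFactorial α (x + α) i * stepFactorial α (1 - x) j)) := by
  have e1 : ((n : ℤ) + p + (-1 + 1) * ((i + 1 : ℕ) : ℤ)).toNat = N + 1 := by omega
  have e2 : ((n : ℤ) + p + -1 * ((i + 1 : ℕ) : ℤ)).toNat = j := by omega
  have hch : ((N : ℝ) + 1) * (N.choose i : ℝ) =
      ((N + 1).choose (i + 1) : ℝ) * ((i : ℝ) + 1) := by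
    exact_mod_cast Nat.add_one_mul_choose_eq N i
  have hNr : (n : ℝ) + p = (N : ℝ) + 1 := by exact_mod_cast hN
  have hN0 : (N : ℝ) + 1 ≠ 0 := by positivity
  have hden : stepFactorial α 1 (N + 1) = stepFactorial α (1 + α) N := by
    rw [stepFactorial_succ', one_mul]
  unfold w
  rw [e1, e2]
  simp only [Int.cast_neg, Int.cast_one, neg_add_cancel, zero_mul, add_zero, neg_mul, one_mul,
    ← sub_eq_add_neg]
  change _ * _ * stepFactorial α x (i + 1) * stepFactorial α (1 - x) j /
    stepFactorial α 1 (N + 1) * _ = _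
  rw [hNr, hden, div_self hN0, stepFactorial_succ']
  push_cast
  linear_combination (-(x * stepFactorial α (x + α) i * stepFactorial α (1 - x) j /
    stepFactorial α (1 + α) N / n)) * hch

/-- the first moment of the generalized operator:
`L_n^{(α)}(t; x) = ((n+p)/n) · x/(1-(λ+1)α)`, the sum/series being convergent. -/
theorem first_moment (n p : ℕ) (hn : 1 ≤ n) (lam : ℤ) (hlam : lam = -1 ∨ lam = 0)
    (α : ℝ) (hα : 0 ≤ α) (hα1 : lam = 0 → α < 1) (x : ℝ) (hx : x ∈ Iset lam) :
    HasSum (fun k : ℕ => w n p lam α x k * ((k : ℝ) / n))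
      (((n : ℝ) + p) / n * (x / (1 - ((lam : ℝ) + 1) * α))) := by
  -- The summand at `k = 0` vanishes, so the series may be shifted by one.
  rw [← hasSum_nat_add_iff' 1]
  rcases hlam with rfl | rfl
  · obtain ⟨N, hN⟩ : ∃ N, n + p = N + 1 := ⟨n + p - 1, by omega⟩
    convert hasSum_sum_of_ne_finset_zero (L := SummationFilter.unconditional ℕ)
      (s := Finset.range (N + 1)) ?_ using 1
    · rw [← Finset.Nat.sum_antidiagonal_eq_sum_range_succ_mk
        (f := fun ij : ℕ × ℕ => w n p (-1) α x (ij.1 + 1) * (((ij.1 + 1 : ℕ) : ℝ) / n)),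
        Finset.sum_congr rfl fun ij hij =>
          w_neg_one_succ n p hN (Finset.HasAntidiagonal.mem_antidiagonal.mp hij),
        ← Finset.mul_sum, stepFactorial_vandermonde]
      have hpos := (stepFactorial_pos hα (by positivity : 0 < 1 + α) N).ne'
      have e : x + α + (1 - x) = 1 + α := by ring
      rw [e, div_mul_cancel₀ _ hpos]
      simp
    · intro k hk
      have hk' : N + 1 < k + 1 := by simpa using hk
      have e1 : ((n : ℤ) + p + (-1 + 1) * ((k + 1 : ℕ) : ℤ)).toNat = N + 1 := by omega
      unfold w
      rw [e1, Nat.choose_eq_zero_of_lt hk']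
      simp
  · have hα' := hα1 rfl
    have hx0 : 0 ≤ x := by simpa [Iset] using hx
    have h := (hasSum_invPolya hα (by linarith : 0 < 1 - α) (add_nonneg hx0 hα)
      (n + p + 1)).mul_left (((n : ℝ) + p) / n * (x / (1 - α)))
    have hval : ((n : ℝ) + p) / n * (x / (1 - (((0 : ℤ) : ℝ) + 1) * α)) -
        ∑ k ∈ Finset.range 1, w n p 0 α x k * ((k : ℝ) / n) =
        ((n : ℝ) + p) / n * (x / (1 - α)) * 1 := by simp
    rw [hval]
    exact h.congr_fun fun j => w_zero_succ n p hn hα' j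
end

section
/- For every integer n ≥ 1, every nonnegative integer p, every λ ∈ {-1, 0}, every real α with 0 ≤ α < 1/2 and every x ∈ I, the second moment of the generalized operator satisfies L_n^{(α)}(t²; x) := Σ_k w_{n,k}^{(α)}(x)·(k/n)² = ((n+p)/(n²(1-λα)(1-(λ+1)α))) · [ (n+p+λ+1)·x(x+α)/(1-2(λ+1)α) + x(1+λx) ], the sum/series being convergent. -/
open Finset Filter Topology

/-- The rising factorial `a (a+α) ⋯ (a+(k-1)α)` with step `α`. -/
noncomputable def rise (α a : ℝ) (k : ℕ) : ℝ := ∏ i ∈ range k, (a + (i : ℝ) * α)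

lemma rise_zero (α a : ℝ) : rise α a 0 = 1 := by simp [rise]

lemma rise_succ (α a : ℝ) (k : ℕ) : rise α a (k + 1) = rise α a k * (a + k * α) := by
  simp [rise, prod_range_succ]

lemma rise_succ_left (α a : ℝ) (k : ℕ) : rise α a (k + 1) = a * rise α (a + α) k := by
  rw [rise, prod_range_succ', rise, mul_comm]
  congr 1
  · simp
  · refine prod_congr rfl fun i _ => ?_
    push_cast
    ring

lemma rise_nonneg {α a : ℝ} (hα : 0 ≤ α) (ha : 0 ≤ a) (k : ℕ) : 0 ≤ rise α a k :=
  prod_nonneg fun _ _ => by positivity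

lemma rise_pos {α a : ℝ} (hα : 0 ≤ α) (ha : 0 < a) (k : ℕ) : 0 < rise α a k :=
  prod_pos fun _ _ => by positivity

lemma hasSum_of_eq {f g : ℕ → ℝ} {s t : ℝ} (h : HasSum g t) (hf : ∀ k, f k = g k) (hs : s = t) :
    HasSum f s := by
  rw [hs, funext hf]
  exact h

lemma hasSum_of_succ {f : ℕ → ℝ} {s : ℝ} (h0 : f 0 = 0) (h : HasSum (fun k => f (k + 1)) s) :
    HasSum f s := by
  have := (hasSum_nat_add_iff (f := f) 1).1 h
  simpa [h0] using this

/-! ### The Pólya distribution -/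

/-- The unnormalized Pólya weight `C(N,k) a^{(k)} b^{(N-k)}`. -/
noncomputable def poly (α a b : ℝ) (N k : ℕ) : ℝ :=
  (N.choose k : ℝ) * rise α a k * rise α b (N - k)

lemma poly_shift (α a b : ℝ) (M k : ℕ) :
    ((k : ℝ) + 1) * poly α a b (M + 1) (k + 1) = (M + 1) * a * poly α (a + α) b M k := by
  have h : ((M : ℝ) + 1) * M.choose k = (M + 1).choose (k + 1) * ((k : ℝ) + 1) := by
    exact_mod_cast Nat.add_one_mul_choose_eq M k
  rw [poly, poly, rise_succ_left, Nat.add_sub_add_right]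
  linear_combination (-(a * rise α (a + α) k * rise α b (M - k))) * h

/-- The Vandermonde identity for rising factorials. -/
lemma vandermonde (α a b : ℝ) (N : ℕ) :
    ∑ ij ∈ antidiagonal N, (N.choose ij.1 : ℝ) * (rise α a ij.1 * rise α b ij.2)
      = rise α (a + b) N := by
  induction N with
  | zero => simp [rise_zero]
  | succ N ih =>
    rw [Finset.sum_antidiagonal_choose_succ_mul (fun i j => rise α a i * rise α b j),
      rise_succ, ← ih, ← sum_add_distrib, sum_mul]
    refine sum_congr rfl fun ij hij => ?_
    have h : ij.1 + ij.2 = N := by simpa using hij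
    have hc : N.choose ij.2 = N.choose ij.1 := by
      rw [← h, Nat.choose_symm_add]
    have hN : (N : ℝ) = ij.1 + ij.2 := by exact_mod_cast h.symm
    rw [hc, rise_succ, rise_succ, hN]
    ring

lemma poly_hasSum (α a b : ℝ) (N : ℕ) : HasSum (poly α a b N) (rise α (a + b) N) := by
  have h : ∑ k ∈ range (N + 1), poly α a b N k = rise α (a + b) N := by
    rw [← vandermonde, Nat.sum_antidiagonal_eq_sum_range_succ_mk]
    exact sum_congr rfl fun k _ => by simp [poly, mul_assoc]
  rw [← h]
  refine hasSum_sum_of_ne_finset_zero fun k hk => ?_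
  have : N < k := by simpa using hk
  simp [poly, Nat.choose_eq_zero_of_lt this]

lemma poly_hasSum_one {α a b : ℝ} (hab : a + b ≠ 0) (N : ℕ) :
    HasSum (fun k : ℕ => (k : ℝ) * poly α a b N k) (N * a * rise α (a + b) N / (a + b)) := by
  refine hasSum_of_succ (by simp) ?_
  cases N with
  | zero =>
    simp [poly]
  | succ M =>
    refine hasSum_of_eq ((poly_hasSum α (a + α) b M).mul_left ((M + 1) * a)) (fun k => ?_) ?_
    · push_cast
      exact poly_shift α a b M k
    · rw [rise_succ_left, show a + α + b = a + b + α by ring]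
      push_cast
      field_simp

lemma poly_hasSum_two {α a b : ℝ} (hab : a + b + α ≠ 0) (M : ℕ) :
    HasSum (fun k : ℕ => (k : ℝ) ^ 2 * poly α a b (M + 1) k)
      ((M + 1) * a * (M * (a + α) / (a + b + α) + 1) * rise α (a + b + α) M) := by
  refine hasSum_of_succ (by simp) ?_
  have hab' : a + α + b ≠ 0 := by rwa [show a + α + b = a + b + α by ring]
  refine hasSum_of_eq (((poly_hasSum_one (α := α) hab' M).add (poly_hasSum α (a + α) b M)).mul_left
    ((M + 1) * a)) (fun k => ?_) ?_
  · push_cast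
    linear_combination ((k : ℝ) + 1) * poly_shift α a b M k
  · rw [show a + α + b = a + b + α by ring]
    field_simp

/-! ### The inverse Pólya distribution -/

/-- The inverse Pólya weight: the probability that `k` failures precede the `N`-th success. With
truncated subtraction the binomial coefficient makes `N = 0` the point mass at `0`. -/
noncomputable def negPoly (α a b : ℝ) (N k : ℕ) : ℝ :=
  ((N + k - 1).choose k : ℝ) * rise α a k * rise α b N / rise α (a + b) (N + k)

/-- The probability of exactly `N` successes in `N + K` trials. -/
noncomputable def exactly (α a b : ℝ) (N K : ℕ) : ℝ :=
  ((N + K).choose K : ℝ) * rise α a K * rise α b N / rise α (a + b) (N + K)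

lemma negPoly_nonneg {α a b : ℝ} (hα : 0 ≤ α) (ha : 0 ≤ a) (hb : 0 < b) (N k : ℕ) :
    0 ≤ negPoly α a b N k := by
  have := rise_nonneg hα ha k
  have := rise_nonneg hα hb.le N
  have := rise_nonneg hα (add_nonneg ha hb.le) (N + k)
  unfold negPoly
  positivity

lemma exactly_nonneg {α a b : ℝ} (hα : 0 ≤ α) (ha : 0 ≤ a) (hb : 0 < b) (N k : ℕ) :
    0 ≤ exactly α a b N k := by
  have := rise_nonneg hα ha k
  have := rise_nonneg hα hb.le N
  have := rise_nonneg hα (add_nonneg ha hb.le) (N + k)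
  unfold exactly
  positivity

/-- The last of `N + 1 + K` trials is the `(N+1)`-st success. -/
lemma negPoly_eq_exactly {α a b : ℝ} (hα : 0 ≤ α) (ha : 0 ≤ a) (hb : 0 < b) (N K : ℕ) :
    negPoly α a b (N + 1) K
      = exactly α a b N K * ((b + N * α) / (a + b + ((N : ℝ) + K) * α)) := by
  have h1 : rise α (a + b) (N + K) ≠ 0 := (rise_pos hα (by positivity) _).ne'
  have h2 : a + b + ((N : ℝ) + K) * α ≠ 0 := by positivity
  rw [negPoly, exactly, show N + 1 + K - 1 = N + K by omega, show N + 1 + K = N + K + 1 by omega,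
    rise_succ, rise_succ]
  push_cast
  field_simp

lemma sum_negPoly {α a b : ℝ} (hα : 0 ≤ α) (ha : 0 ≤ a) (hb : 0 < b) (N K : ℕ) :
    ∑ k ∈ range (K + 1), negPoly α a b N k
      = ∑ k ∈ range K, negPoly α a b (N + 1) k + exactly α a b N K := by
  induction K with
  | zero => simp [negPoly, exactly]
  | succ K ih =>
    rw [sum_range_succ, ih, sum_range_succ _ K]
    have h1 : rise α (a + b) (N + K) ≠ 0 := (rise_pos hα (by positivity) _).ne'
    have h2 : a + b + ((N : ℝ) + K) * α ≠ 0 := by positivity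
    have key : negPoly α a b N (K + 1) + exactly α a b N K
        = negPoly α a b (N + 1) K + exactly α a b N (K + 1) := by
      rw [negPoly_eq_exactly hα ha hb, negPoly, exactly, exactly,
        show N + (K + 1) - 1 = N + K by omega, show N + (K + 1) = N + K + 1 by omega,
        Nat.choose_succ_succ, rise_succ, rise_succ]
      push_cast
      field_simp
      ring
    linear_combination key

lemma negPoly_hasSum {α a b : ℝ} (hα : 0 ≤ α) (ha : 0 ≤ a) (hb : 0 < b) (N : ℕ) :
    HasSum (negPoly α a b N) 1 := by
  induction N with
  | zero =>
    convert hasSum_ite_eq (0 : ℕ) (1 : ℝ) using 2 with k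
    cases k with
    | zero => simp [negPoly, rise_zero]
    | succ k => simp [negPoly]
  | succ N ih =>
    have hW := negPoly_nonneg hα ha hb (N + 1)
    have hQ := exactly_nonneg hα ha hb N
    have hs : Summable (negPoly α a b (N + 1)) := by
      refine summable_of_sum_range_le (c := 1) hW fun K => ?_
      have h1 := sum_negPoly hα ha hb N K
      have h2 := sum_le_hasSum (range (K + 1)) (fun k _ => negPoly_nonneg hα ha hb N k) ih
      linarith [hQ K]
    have hT := hs.hasSum.tendsto_sum_nat
    have hlim : Tendsto (exactly α a b N) atTop
        (𝓝 (1 - ∑' k, negPoly α a b (N + 1) k)) := by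
      refine (((tendsto_add_atTop_iff_nat 1).2 ih.tendsto_sum_nat).sub hT).congr fun K => ?_
      rw [sum_negPoly hα ha hb N K]
      ring
    set L := 1 - ∑' k, negPoly α a b (N + 1) k with hL
    have hL0 : 0 ≤ L := ge_of_tendsto' hlim hQ
    have hLz : L = 0 := by
      by_contra hne
      have hpos : 0 < L := lt_of_le_of_ne hL0 (Ne.symm hne)
      -- With `D` as below, `a + b + (N + K) α ≤ D (K + 1)` for every `K`.
      set D : ℝ := a + b + N * α + α with hD
      have hDpos : 0 < D := by positivity
      have hcpos : 0 < L / 2 * (b / D) := by positivity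
      have hev : ∀ᶠ K : ℕ in atTop, L / 2 < exactly α a b N K :=
        hlim.eventually (lt_mem_nhds (by linarith))
      have hsum : Summable fun K : ℕ => L / 2 * (b / D) * (1 / ((K : ℝ) + 1)) := by
        refine hs.of_norm_bounded_eventually_nat ?_
        filter_upwards [hev] with K hK
        rw [negPoly_eq_exactly hα ha hb, Real.norm_of_nonneg (by positivity), mul_assoc]
        refine mul_le_mul hK.le ?_ (by positivity) (hQ K)
        rw [div_mul_div_comm, mul_one]
        refine div_le_div₀ (by positivity) (by nlinarith [mul_nonneg (Nat.cast_nonneg (α := ℝ) N) hα])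
          (by positivity) ?_
        have hK0 : (0 : ℝ) ≤ K := Nat.cast_nonneg K
        have : 0 ≤ (a + b + N * α) * K := by positivity
        rw [hD]
        nlinarith
      have h1 : Summable fun K : ℕ => 1 / ((K : ℝ) + 1) :=
        (summable_mul_left_iff hcpos.ne').1 hsum
      have h2 : Summable fun K : ℕ => 1 / (K : ℝ) :=
        (summable_nat_add_iff 1).1 (by simpa using h1)
      exact Real.not_summable_one_div_natCast h2
    have : ∑' k, negPoly α a b (N + 1) k = 1 := by linarith
    exact this ▸ hs.hasSum

lemma negPoly_shift {α a b : ℝ} (hb : b - α ≠ 0) (N k : ℕ) :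
    ((k : ℝ) + 1) * negPoly α a b N (k + 1)
      = N * a / (b - α) * negPoly α (a + α) (b - α) (N + 1) k := by
  have h : (((N + k).choose (k + 1) : ℕ) : ℝ) * ((k : ℝ) + 1) = (N + k).choose k * N := by
    have := Nat.choose_succ_right_eq (N + k) k
    rw [Nat.add_sub_cancel] at this
    exact_mod_cast this
  rw [negPoly, negPoly, show N + (k + 1) - 1 = N + k by omega,
    show N + 1 + k - 1 = N + k by omega, show N + (k + 1) = N + 1 + k by omega,
    show a + α + (b - α) = a + b by ring, rise_succ_left α a, rise_succ_left α (b - α),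
    sub_add_cancel]
  field_simp
  linear_combination (a * rise α (a + α) k * rise α b N / rise α (a + b) (N + 1 + k)) * h

lemma negPoly_hasSum_one {α a b : ℝ} (hα : 0 ≤ α) (ha : 0 ≤ a) (hb : 0 < b - α) (N : ℕ) :
    HasSum (fun k : ℕ => (k : ℝ) * negPoly α a b N k) (N * a / (b - α)) := by
  refine hasSum_of_succ (by simp) ?_
  refine hasSum_of_eq ((negPoly_hasSum hα (add_nonneg ha hα) hb (N + 1)).mul_left (N * a / (b - α))) (fun k => ?_) ?_
  · push_cast
    exact negPoly_shift hb.ne' N k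
  · ring

lemma negPoly_hasSum_two {α a b : ℝ} (hα : 0 ≤ α) (ha : 0 ≤ a) (hb : 0 < b - α - α) (N : ℕ) :
    HasSum (fun k : ℕ => (k : ℝ) ^ 2 * negPoly α a b N k)
      (N * a / (b - α) * ((N + 1) * (a + α) / (b - α - α) + 1)) := by
  refine hasSum_of_succ (by simp) ?_
  have hb' : 0 < b - α := by linarith
  refine hasSum_of_eq (((negPoly_hasSum_one hα (add_nonneg ha hα) hb (N + 1)).add
    (negPoly_hasSum hα (add_nonneg ha hα) hb' (N + 1))).mul_left (N * a / (b - α))) (fun k => ?_) ?_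
  · push_cast
    linear_combination ((k : ℝ) + 1) * negPoly_shift (a := a) hb'.ne' N k
  · push_cast
    ring

/-! ### The weights of the operator -/

lemma w_neg_one (n p : ℕ) (hn : 1 ≤ n) (α x : ℝ) (k : ℕ) :
    w n p (-1) α x k = poly α x (1 - x) (n + p) k / rise α 1 (n + p) := by
  have hN : (n : ℝ) + p ≠ 0 := by positivity
  have e1 : ((n : ℤ) + p + (-1 + 1) * k).toNat = n + p := by simp; omega
  have e2 : ((n : ℤ) + p + (-1) * k).toNat = n + p - k := by omega
  simp only [w, e1, e2, poly, rise]
  simp [hN, sub_eq_add_neg]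

lemma w_zero (n p : ℕ) (hn : 1 ≤ n) (α x : ℝ) (k : ℕ) :
    w n p 0 α x k = negPoly α x 1 (n + p) k := by
  have e1 : ((n : ℤ) + p + (0 + 1) * k).toNat = n + p + k := by omega
  have e2 : ((n : ℤ) + p + 0 * k).toNat = n + p := by simp; omega
  have hN : (n : ℝ) + p + k ≠ 0 := by positivity
  have hc : ((n : ℝ) + p) / (n + p + k) * ((n + p + k).choose k : ℝ)
      = ((n + p + k - 1).choose k : ℝ) := by
    obtain ⟨m, rfl⟩ : ∃ m, n = m + 1 := ⟨n - 1, by omega⟩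
    have h := Nat.choose_mul_succ_eq (m + p + k) k
    rw [show m + p + k + 1 - k = m + 1 + p by omega] at h
    rw [show m + 1 + p + k - 1 = m + p + k by omega, show m + 1 + p + k = m + p + k + 1 by omega]
    have h' : ((m + p + k).choose k : ℝ) * ((m : ℝ) + p + k + 1)
        = (m + p + k + 1).choose k * ((m : ℝ) + 1 + p) := by exact_mod_cast h
    push_cast at hN ⊢
    field_simp
    linear_combination -h'
  simp only [w, e1, e2, negPoly, rise]
  rw [← hc]
  simp [add_comm x 1]

/-- the second moment of the generalized operator:
`L_n^{(α)}(t²;x) = ((n+p)/(n²(1-λα)(1-(λ+1)α))) · [(n+p+λ+1)x(x+α)/(1-2(λ+1)α) + x(1+λx)]`,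
the sum/series being convergent. -/
theorem second_moment (n p : ℕ) (hn : 1 ≤ n) (lam : ℤ) (hlam : lam = -1 ∨ lam = 0)
    (α : ℝ) (hα : 0 ≤ α) (hα2 : α < 1/2) (x : ℝ) (hx : x ∈ Iset lam) :
    HasSum (fun k : ℕ => w n p lam α x k * ((k : ℝ) / n) ^ 2)
      (((n : ℝ) + p) / ((n : ℝ) ^ 2 * (1 - (lam : ℝ) * α) * (1 - ((lam : ℝ) + 1) * α)) *
        (((n : ℝ) + p + (lam : ℝ) + 1) * x * (x + α) / (1 - 2 * ((lam : ℝ) + 1) * α) +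
          x * (1 + (lam : ℝ) * x))) := by
  have hn0 : (n : ℝ) ≠ 0 := by positivity
  rcases hlam with rfl | rfl
  · obtain ⟨M, hM⟩ : ∃ M, n + p = M + 1 := ⟨n + p - 1, by omega⟩
    have hM' : (n : ℝ) + p = M + 1 := by exact_mod_cast hM
    have h1 : (1 : ℝ) + α ≠ 0 := by positivity
    have hr : rise α (1 + α) M ≠ 0 := (rise_pos hα (by positivity) M).ne'
    have hs : x + (1 - x) + α = 1 + α := by ring
    refine hasSum_of_eq ((poly_hasSum_two (α := α) (a := x) (b := 1 - x) (hs ▸ h1) M).mul_left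
      (1 / (rise α (1 + α) M * (n : ℝ) ^ 2))) (fun k => ?_) ?_
    · rw [w_neg_one n p hn, hM, rise_succ_left, one_mul]
      field_simp
    · rw [hs, hM']
      push_cast
      have h2 : (1 : ℝ) - -1 * α ≠ 0 := by rwa [show (1 : ℝ) - -1 * α = 1 + α by ring]
      norm_num
      field_simp
      ring
  · have hx0 : 0 ≤ x := by simpa [Iset] using hx
    have h1 : (1 : ℝ) - α ≠ 0 := by linarith
    have h2 : (1 : ℝ) - α - α ≠ 0 := by linarith
    refine hasSum_of_eq ((negPoly_hasSum_two (α := α) (a := x) (b := 1) hα hx0 (by linarith) (n + p)).mul_left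
      (1 / (n : ℝ) ^ 2)) (fun k => ?_) ?_
    · rw [w_zero n p hn]
      field_simp
    · push_cast
      rw [show (1 : ℝ) - 2 * (0 + 1) * α = 1 - α - α by ring]
      norm_num
      field_simp
end
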